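/- Let n = 2 and consider two cameras A_1, A_2 ∈ ℝ^{3×4}. For any indices j, k ∈ {1,2,3}, there exists a 4×4 minor f of the 6×4 matrix A^F(p) = [[p_1]_× A_1 ; [p_2]_× A_2] (the one obtained by deleting the row of [p_1]_× A_1 not containing p_{1j} and the row of [p_2]_× A_2 not containing p_{2k}) such that f = (−1)^{j+k} p_{1j} p_{2k} · det A(p), where A(p) is the 6×6 matrix [A_1, p_1, 0; A_2, 0, p_2] and p_{i1}=x_i, p_{i2}=y_i, p_{i3}=z_i. -/

import Mathlib

noncomputable section

/-- The polynomial ring `ℂ[x_1,y_1,z_1,x_2,y_2,z_2]` of symbolic image coordinates of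
two cameras: `X (i, j)` is the `j`-th coordinate `p_{ij}` of the image point in camera `i`. -/
abbrev S2 := MvPolynomial (Fin 2 × Fin 3) ℂ

/-- The symbolic image point of camera `i`. -/
def pv (i : Fin 2) : Fin 3 → S2 := fun j => MvPolynomial.X (i, j)

/-- The skew-symmetric cross-product matrix `[v]_×`. -/
def crossMat (v : Fin 3 → S2) : Matrix (Fin 3) (Fin 3) S2 :=
  !![0, -v 2, v 1; v 2, 0, -v 0; -v 1, v 0, 0]

/-- A real camera matrix viewed over the polynomial ring. -/
def camC (A : Matrix (Fin 3) (Fin 4) ℝ) : Matrix (Fin 3) (Fin 4) S2 :=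
  A.map fun a => MvPolynomial.C ((a : ℝ) : ℂ)

/-- The `6 × 4` Faugeras matrix `A^F(p) = [[p_1]_× A_1 ; [p_2]_× A_2]`. -/
def AF (A₁ A₂ : Matrix (Fin 3) (Fin 4) ℝ) : Matrix (Fin 3 ⊕ Fin 3) (Fin 4) S2 :=
  Matrix.fromRows (crossMat (pv 0) * camC A₁) (crossMat (pv 1) * camC A₂)

/-- The `6 × 6` matrix `A(p) = [A_1, p_1, 0; A_2, 0, p_2]`. -/
def Ap (A₁ A₂ : Matrix (Fin 3) (Fin 4) ℝ) : Matrix (Fin 3 ⊕ Fin 3) (Fin 4 ⊕ Fin 2) S2 :=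
  Matrix.of fun r c =>
    match r, c with
    | Sum.inl r', Sum.inl c' => camC A₁ r' c'
    | Sum.inl r', Sum.inr i => if i = 0 then MvPolynomial.X ((0 : Fin 2), r') else 0
    | Sum.inr r', Sum.inl c' => camC A₂ r' c'
    | Sum.inr r', Sum.inr i => if i = 1 then MvPolynomial.X ((1 : Fin 2), r') else 0

/-!
Replace row `j` of `[u]_×` by the unit vector `e_j`. The resulting matrix has determinant `u_j ^ 2`
and sends `u` to `u_j e_j`, because `u × u = 0`. Let it act on the first camera and its analogue
for `v`, `k` on the second one: `det A(p)` gets multiplied by `u_j ^ 2 * v_k ^ 2`, while the last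
two columns become multiples of unit vectors, and Laplace expansion along them leaves the minor of
`A^F(p)`, multiplied by `± u_j * v_k`. The common factor `u_j * v_k` can be cancelled over any
commutative ring after adding a polynomial variable to the coordinates, which makes them monic.
-/

open Matrix Polynomial

section CommRing

variable {R : Type*} [CommRing R]

theorem det_of_col_eq_single {n : ℕ} (M : Matrix (Fin (n + 1)) (Fin (n + 1)) R)
    {p q : Fin (n + 1)} {a : R} (h : M.col q = Pi.single p a) :
    M.det = (-1) ^ (p + q : ℕ) * a * (M.submatrix p.succAbove q.succAbove).det := by
  have entry (i : Fin (n + 1)) : M i q = (Pi.single p a : Fin (n + 1) → R) i := congrFun h i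
  rw [det_succ_column M q, Fintype.sum_eq_single p fun i hi => by simp [entry, hi], entry,
    Pi.single_eq_same]

theorem det_of_last_two_cols_eq_single {n : ℕ} (M : Matrix (Fin (n + 2)) (Fin (n + 2)) R)
    {p : Fin (n + 2)} {q : Fin (n + 1)} {a b : R}
    (ha : M.col (Fin.last n).castSucc = Pi.single (p.succAbove q) a)
    (hb : M.col (Fin.last (n + 1)) = Pi.single p b) :
    M.det = (-1) ^ (q + p + 1 : ℕ) * a * b *
      (M.submatrix (p.succAbove ∘ q.succAbove) (Fin.castSucc ∘ Fin.castSucc)).det := by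
  have ha' : (M.submatrix p.succAbove (Fin.last (n + 1)).succAbove).col (Fin.last n) =
      Pi.single q a := by
    ext i
    rw [col_apply, submatrix_apply, Fin.succAbove_last, ← col_apply M, ha]
    simp [Pi.single_apply]
  have sign : (-1 : R) ^ (p + (n + 1) : ℕ) * (-1) ^ (q + n : ℕ) = (-1) ^ (q + p + 1 : ℕ) := by
    rw [← pow_add, show (p + (n + 1) + (q + n) : ℕ) = q + p + 1 + 2 * n by ring, pow_add,
      (even_two_mul n).neg_one_pow, mul_one]
  rw [det_of_col_eq_single M hb, det_of_col_eq_single _ ha', submatrix_submatrix,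
    Fin.succAbove_last, Fin.succAbove_last, Fin.val_last, Fin.val_last, ← sign]
  ring

/-- The matrix `[u]_×` of the cross product with `u`, over any commutative ring. -/
def crossProductMatrix (u : Fin 3 → R) : Matrix (Fin 3) (Fin 3) R :=
  !![0, -u 2, u 1; u 2, 0, -u 0; -u 1, u 0, 0]

theorem crossProductMatrix_mulVec (u w : Fin 3 → R) :
    crossProductMatrix u *ᵥ w = u ⨯₃ w := by
  ext i
  fin_cases i <;>
    simp [crossProductMatrix, cross_apply, mulVec, vec3_dotProduct, -cons_dotProduct] <;> ring

theorem map_crossProductMatrix {S : Type*} [CommRing S] (φ : R →+* S) (u : Fin 3 → R) :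
    (crossProductMatrix u).map φ = crossProductMatrix (φ ∘ u) := by
  ext i l
  fin_cases i <;> fin_cases l <;> simp [crossProductMatrix]

/-- The matrix `[u]_×` with row `j` replaced by the unit vector `e_j`. Multiplication by it turns
the column `u` into a multiple of `e_j`. -/
def crossEliminationMatrix (u : Fin 3 → R) (j : Fin 3) : Matrix (Fin 3) (Fin 3) R :=
  (crossProductMatrix u).updateRow j (Pi.single j 1)

theorem det_crossEliminationMatrix (u : Fin 3 → R) (j : Fin 3) :
    (crossEliminationMatrix u j).det = u j ^ 2 := by
  fin_cases j <;>
    simp [crossEliminationMatrix, crossProductMatrix, det_fin_three, updateRow_apply, sq]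

theorem crossEliminationMatrix_mulVec_self (u : Fin 3 → R) (j : Fin 3) :
    crossEliminationMatrix u j *ᵥ u = Pi.single j (u j) := by
  rw [crossEliminationMatrix, updateRow_mulVec, crossProductMatrix_mulVec, cross_self,
    single_one_dotProduct, Pi.single]

theorem crossEliminationMatrix_mul_apply_of_ne {n : Type*} (u : Fin 3 → R)
    (A : Matrix (Fin 3) n R) {i j : Fin 3} (h : i ≠ j) (c : n) :
    (crossEliminationMatrix u j * A) i c = (crossProductMatrix u * A) i c := by
  rw [crossEliminationMatrix, updateRow_mul, updateRow_ne h]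

/-- The matrix `[A, u, 0; B, 0, v]` of two cameras `A`, `B` and two image points `u`, `v`. -/
def bifocalMatrix (A B : Matrix (Fin 3) (Fin 4) R) (u v : Fin 3 → R) :
    Matrix (Fin 3 ⊕ Fin 3) (Fin 4 ⊕ Fin 2) R :=
  fromBlocks A (of fun i => ![u i, 0]) B (of fun i => ![0, v i])

/-- The bifocal (epipolar) form `det [A, u, 0; B, 0, v]`; rows and columns are numbered in block
order, which fixes the sign. -/
def bifocalForm (A B : Matrix (Fin 3) (Fin 4) R) (u v : Fin 3 → R) : R :=
  ((bifocalMatrix A B u v).submatrix (finSumFinEquiv (m := 3) (n := 3)).symm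
    (finSumFinEquiv (m := 4) (n := 2)).symm).det

/-- The Faugeras matrix `[[u]_× A; [v]_× B]`, over any commutative ring. -/
def faugerasMatrix (A B : Matrix (Fin 3) (Fin 4) R) (u v : Fin 3 → R) :
    Matrix (Fin 3 ⊕ Fin 3) (Fin 4) R :=
  fromRows (crossProductMatrix u * A) (crossProductMatrix v * B)

/-- The increasing enumeration of the rows that remain after deleting row `j` of the first block
and row `k` of the second one. -/
def remainingRows (j k : Fin 3) : Fin 4 → Fin 3 ⊕ Fin 3 :=
  Sum.map j.succAbove k.succAbove ∘ (finSumFinEquiv (m := 2) (n := 2)).symm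

theorem remainingRows_injective (j k : Fin 3) : Function.Injective (remainingRows j k) :=
  (Sum.map_injective.2 ⟨Fin.succAbove_right_injective, Fin.succAbove_right_injective⟩).comp
    (Equiv.injective _)

theorem remainingRows_ne (j k : Fin 3) (r : Fin 4) :
    remainingRows j k r ≠ Sum.inl j ∧ remainingRows j k r ≠ Sum.inr k := by
  revert j k r
  decide

theorem finSumFinEquiv_symm_succAbove_succAbove (j k : Fin 3) (r : Fin 4) :
    (finSumFinEquiv (m := 3) (n := 3)).symm
      ((Fin.natAdd 3 k).succAbove ((Fin.castAdd 2 j).succAbove r)) = remainingRows j k r := by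
  revert j k r
  decide

/-- The minor of the Faugeras matrix that omits row `j` of the first block and row `k` of the
second one. -/
def faugerasMinor (A B : Matrix (Fin 3) (Fin 4) R) (u v : Fin 3 → R) (j k : Fin 3) : R :=
  ((faugerasMatrix A B u v).submatrix (remainingRows j k) id).det

theorem fromBlocks_mul_bifocalMatrix (P Q : Matrix (Fin 3) (Fin 3) R)
    (A B : Matrix (Fin 3) (Fin 4) R) (u v : Fin 3 → R) :
    fromBlocks P 0 0 Q * bifocalMatrix A B u v =
      bifocalMatrix (P * A) (Q * B) (P *ᵥ u) (Q *ᵥ v) := by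
  simp only [bifocalMatrix, fromBlocks_multiply, Matrix.zero_mul, add_zero, zero_add]
  congr 1 <;> ext i c <;> fin_cases c <;> simp [mul_apply, mulVec, dotProduct]

theorem bifocalForm_mul (P Q : Matrix (Fin 3) (Fin 3) R) (A B : Matrix (Fin 3) (Fin 4) R)
    (u v : Fin 3 → R) :
    bifocalForm (P * A) (Q * B) (P *ᵥ u) (Q *ᵥ v) = P.det * Q.det * bifocalForm A B u v := by
  simp only [bifocalForm]
  rw [← fromBlocks_mul_bifocalMatrix, ← submatrix_mul_equiv _ _ _ finSumFinEquiv.symm, det_mul,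
    det_submatrix_equiv_self, det_fromBlocks_zero₂₁]

theorem bifocalMatrix_single_left_col (A B : Matrix (Fin 3) (Fin 4) R) (j : Fin 3) (a : R)
    (v : Fin 3 → R) :
    (bifocalMatrix A B (Pi.single j a) v).col (Sum.inr 0) = Pi.single (Sum.inl j) a := by
  ext (i | i) <;> simp [bifocalMatrix, Pi.single_apply]

theorem bifocalMatrix_single_right_col (A B : Matrix (Fin 3) (Fin 4) R) (u : Fin 3 → R)
    (k : Fin 3) (b : R) :
    (bifocalMatrix A B u (Pi.single k b)).col (Sum.inr 1) = Pi.single (Sum.inr k) b := by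
  ext (i | i) <;> simp [bifocalMatrix, Pi.single_apply]

theorem bifocalForm_single (A B : Matrix (Fin 3) (Fin 4) R) (j k : Fin 3) (a b : R) :
    bifocalForm A B (Pi.single j a) (Pi.single k b) =
      (-1) ^ (j + k : ℕ) * a * b * ((fromRows A B).submatrix (remainingRows j k) id).det := by
  let M : Matrix (Fin 6) (Fin 6) R :=
    (bifocalMatrix A B (Pi.single j a) (Pi.single k b)).submatrix
      (finSumFinEquiv (m := 3) (n := 3)).symm (finSumFinEquiv (m := 4) (n := 2)).symm
  have row_j : (Fin.natAdd 3 k).succAbove (Fin.castAdd 2 j) = Fin.castAdd 3 j := by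
    revert j k
    decide
  have first_point_col : M.col (Fin.last 4).castSucc =
      Pi.single ((Fin.natAdd 3 k).succAbove (Fin.castAdd 2 j)) a := by
    rw [row_j]
    exact (congrArg (· ∘ finSumFinEquiv.symm) (bifocalMatrix_single_left_col A B j a _)).trans
      (Pi.single_comp_equiv _ _ _)
  have second_point_col : M.col (Fin.last 5) = Pi.single (Fin.natAdd 3 k) b :=
    (congrArg (· ∘ finSumFinEquiv.symm) (bifocalMatrix_single_right_col A B _ k b)).trans
      (Pi.single_comp_equiv _ _ _)
  have minor : M.submatrix ((Fin.natAdd 3 k).succAbove ∘ (Fin.castAdd 2 j).succAbove)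
      (Fin.castSucc ∘ Fin.castSucc) = (fromRows A B).submatrix (remainingRows j k) id := by
    ext r c
    have col_c : (finSumFinEquiv (m := 4) (n := 2)).symm c.castSucc.castSucc = Sum.inl c :=
      finSumFinEquiv_symm_apply_castAdd c
    simp only [M, submatrix_apply, Function.comp_apply, id,
      finSumFinEquiv_symm_succAbove_succAbove, col_c]
    rcases remainingRows j k r with i | i <;> rfl
  have sign : (-1 : R) ^ (j + (3 + k) + 1 : ℕ) = (-1) ^ (j + k : ℕ) := by
    ring
  calc M.det = _ := det_of_last_two_cols_eq_single M first_point_col second_point_col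
    _ = _ := by rw [minor, Fin.val_castAdd, Fin.val_natAdd, sign]

theorem det_fromRows_crossEliminationMatrix (A B : Matrix (Fin 3) (Fin 4) R) (u v : Fin 3 → R)
    (j k : Fin 3) :
    ((fromRows (crossEliminationMatrix u j * A) (crossEliminationMatrix v k * B)).submatrix
      (remainingRows j k) id).det = faugerasMinor A B u v j k := by
  refine congrArg det (Matrix.ext fun r c => ?_)
  obtain ⟨hj, hk⟩ := remainingRows_ne j k r
  simp only [submatrix_apply, faugerasMatrix]
  rcases hr : remainingRows j k r with i | i
  · exact crossEliminationMatrix_mul_apply_of_ne u A (fun h => hj (hr.trans (congrArg _ h))) c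
  · exact crossEliminationMatrix_mul_apply_of_ne v B (fun h => hk (hr.trans (congrArg _ h))) c

theorem mul_faugerasMinor_eq_mul_bifocalForm (A B : Matrix (Fin 3) (Fin 4) R) (u v : Fin 3 → R)
    (j k : Fin 3) :
    (u j * v k) * faugerasMinor A B u v j k =
      (u j * v k) * ((-1) ^ (j + k : ℕ) * u j * v k * bifocalForm A B u v) := by
  have elimination : (-1) ^ (j + k : ℕ) * u j * v k * faugerasMinor A B u v j k =
      u j ^ 2 * v k ^ 2 * bifocalForm A B u v := by
    simpa only [crossEliminationMatrix_mulVec_self, bifocalForm_single,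
      det_fromRows_crossEliminationMatrix, det_crossEliminationMatrix] using
      bifocalForm_mul (crossEliminationMatrix u j) (crossEliminationMatrix v k) A B u v
  have sign_sq : ((-1 : R) ^ (j + k : ℕ)) ^ 2 = 1 := by rw [pow_right_comm, neg_one_sq, one_pow]
  linear_combination (-1) ^ (j + k : ℕ) * elimination -
    u j * v k * faugerasMinor A B u v j k * sign_sq

theorem map_faugerasMinor {S : Type*} [CommRing S] (φ : R →+* S) (A B : Matrix (Fin 3) (Fin 4) R)
    (u v : Fin 3 → R) (j k : Fin 3) :
    φ (faugerasMinor A B u v j k) =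
      faugerasMinor (A.map φ) (B.map φ) (φ ∘ u) (φ ∘ v) j k := by
  simp only [faugerasMinor, faugerasMatrix, RingHom.map_det, RingHom.mapMatrix_apply,
    ← submatrix_map, fromRows_map, Matrix.map_mul, map_crossProductMatrix]

theorem map_bifocalMatrix {S : Type*} [CommRing S] (φ : R →+* S) (A B : Matrix (Fin 3) (Fin 4) R)
    (u v : Fin 3 → R) :
    (bifocalMatrix A B u v).map φ = bifocalMatrix (A.map φ) (B.map φ) (φ ∘ u) (φ ∘ v) := by
  rw [bifocalMatrix, bifocalMatrix, fromBlocks_map]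
  congr 1 <;> ext i c <;> fin_cases c <;> simp

theorem map_bifocalForm {S : Type*} [CommRing S] (φ : R →+* S) (A B : Matrix (Fin 3) (Fin 4) R)
    (u v : Fin 3 → R) :
    φ (bifocalForm A B u v) = bifocalForm (A.map φ) (B.map φ) (φ ∘ u) (φ ∘ v) := by
  simp only [bifocalForm, RingHom.map_det, RingHom.mapMatrix_apply, ← submatrix_map,
    map_bifocalMatrix]

theorem faugerasMinor_eq_mul_bifocalForm (A B : Matrix (Fin 3) (Fin 4) R) (u v : Fin 3 → R)
    (j k : Fin 3) :
    faugerasMinor A B u v j k = (-1) ^ (j + k : ℕ) * u j * v k * bifocalForm A B u v := by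
  let generic (w : Fin 3 → R) : Fin 3 → R[X] := fun i => X + C (w i)
  have isRegular_generic (w : Fin 3 → R) (i : Fin 3) : IsRegular (generic w i) :=
    (monic_X_add_C (w i)).isRegular
  have eval_generic (w : Fin 3 → R) (i : Fin 3) : evalRingHom 0 (generic w i) = w i := by
    simp [generic]
  have eval_comp_generic (w : Fin 3 → R) : evalRingHom 0 ∘ generic w = w :=
    funext (eval_generic w)
  have eval_map_C (M : Matrix (Fin 3) (Fin 4) R) : (M.map C).map (evalRingHom 0) = M := by
    ext i c
    simp
  have generic_eq := ((isRegular_generic u j).mul (isRegular_generic v k)).left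
    (mul_faugerasMinor_eq_mul_bifocalForm (A.map C) (B.map C) (generic u) (generic v) j k)
  simpa only [map_mul, map_pow, map_neg, map_one, map_faugerasMinor, map_bifocalForm,
    eval_generic, eval_comp_generic, eval_map_C] using congrArg (evalRingHom 0) generic_eq

theorem faugeras_minor_eq_bifocal_general (A B : Matrix (Fin 3) (Fin 4) R)
    (u v : Fin 3 → R) (j k : Fin 3) :
    ∃ f : Fin 4 → Fin 3 ⊕ Fin 3, Function.Injective f ∧
      (∀ r, f r ≠ Sum.inl j ∧ f r ≠ Sum.inr k) ∧
      ((faugerasMatrix A B u v).submatrix f id).det =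
        (-1) ^ (j + k : ℕ) * u j * v k * bifocalForm A B u v :=
  ⟨remainingRows j k, remainingRows_injective j k, remainingRows_ne j k,
    faugerasMinor_eq_mul_bifocalForm A B u v j k⟩

end CommRing

theorem AF_eq_faugerasMatrix (A₁ A₂ : Matrix (Fin 3) (Fin 4) ℝ) :
    AF A₁ A₂ = faugerasMatrix (camC A₁) (camC A₂) (pv 0) (pv 1) :=
  rfl

theorem Ap_eq_bifocalMatrix (A₁ A₂ : Matrix (Fin 3) (Fin 4) ℝ) :
    Ap A₁ A₂ = bifocalMatrix (camC A₁) (camC A₂) (pv 0) (pv 1) := by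
  ext (r | r) (c | c)
  · rfl
  · fin_cases c <;> rfl
  · rfl
  · fin_cases c <;> rfl

/-- For two cameras and any coordinate indices `j, k`, the `4 × 4` minor of `A^F(p)`
obtained by deleting the row of `[p_1]_× A_1` not containing `p_{1j}` (row `j`) and the
row of `[p_2]_× A_2` not containing `p_{2k}` (row `k`) equals
`(−1)^{j+k} p_{1j} p_{2k} · det A(p)`, where `det A(p)` is the bifocal polynomial. -/
theorem faugeras_minor_eq_bifocal (A₁ A₂ : Matrix (Fin 3) (Fin 4) ℝ) (j k : Fin 3) :
    ∃ f : Fin 4 → Fin 3 ⊕ Fin 3, Function.Injective f ∧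
      (∀ r, f r ≠ Sum.inl j ∧ f r ≠ Sum.inr k) ∧
      ((AF A₁ A₂).submatrix f id).det =
        (-1 : S2) ^ ((j : ℕ) + (k : ℕ)) * MvPolynomial.X ((0 : Fin 2), j) *
          MvPolynomial.X ((1 : Fin 2), k) *
          ((Ap A₁ A₂).submatrix (finSumFinEquiv (m := 3) (n := 3)).symm
            (finSumFinEquiv (m := 4) (n := 2)).symm).det := by
  rw [AF_eq_faugerasMatrix, Ap_eq_bifocalMatrix]
  exact faugeras_minor_eq_bifocal_general (camC A₁) (camC A₂) (pv 0) (pv 1) j k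

end
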